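/- arXiv:2405.10179 — 3 statements merged into one kernel-verified Lean document; each statement's English description precedes it below -/
import Mathlib

section
/- In the linear setting, assume (C1): lim_{n→∞} (1 − h_n)·ln n = 0, and (C2): sup_{k≥0} (b_k − b_{k+1})/b_{k+1} < ∞. Then lim_{n→∞} H_{h_n}(J_n) = 1. -/
open Set Filter MeasureTheory Topology

noncomputable section

/-- Composition `g_{i₁} ∘ g_{i₂} ∘ ⋯ ∘ g_{i_l}` along a finite word. -/
def wordComp (g : ℕ → ℝ → ℝ) : List ℕ → ℝ → ℝ
  | [] => id
  | k :: w => g k ∘ wordComp g w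

/-- The limit set `J_n` of the IFS `S_n = {g_1, …, g_n}`. -/
def limitSet (g : ℕ → ℝ → ℝ) (n : ℕ) : Set ℝ :=
  ⋂ l : ℕ, ⋃ w ∈ {w : List ℕ | w.length = l + 1 ∧ ∀ i ∈ w, 1 ≤ i ∧ i ≤ n},
    wordComp g w '' Set.Icc (0 : ℝ) 1

/-- The decreasing affine map `g_k(x) = b_{k-1} - (b_{k-1} - b_k)·x`. -/
def gAff (b : ℕ → ℝ) (k : ℕ) (x : ℝ) : ℝ := b (k - 1) - (b (k - 1) - b k) * x

/-!
The upper bound is the covering by cylinders: the `s`-th powers of their lengths sum to one.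

For the lower bound put weight `a_k ^ s` on the `k`-th map and apply the resulting Hutchinson
operator repeatedly to Lebesgue measure. By concavity, a union of consecutive gaps of total length
`u` has mass at most `n ^ (1 - s) * u ^ s`, and the rest of an interval is an end piece of a gap,
hence a scaled end interval of `[0, 1]`. By (C2) that piece takes up at most a fraction `ρ < 1` of
an end interval, so iterating costs only a geometric series and end intervals of length `t` keep
mass at most `K * t ^ s` with `K` independent of the iterate. An arbitrary interval is, at the first
scale where it is cut, a union of gaps and two such end pieces, which costs a factor `3 ^ (1 - s)`.
The mass distribution principle then gives `(3 ^ (1 - s) * K)⁻¹` as a lower bound, and by (C1) both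
`n ^ (1 - s)` and `K` tend to one along `s = h n`.
-/

open scoped ENNReal NNReal

theorem sum_rpow_le_card_rpow_mul_rpow_sum {ι : Type*} (t : Finset ι) {f : ι → ℝ}
    (hf : ∀ i ∈ t, 0 ≤ f i) {s : ℝ} (hs₀ : 0 < s) (hs₁ : s ≤ 1) :
    ∑ i ∈ t, f i ^ s ≤ (t.card : ℝ) ^ (1 - s) * (∑ i ∈ t, f i) ^ s := by
  have hA : 0 ≤ ∑ i ∈ t, f i ^ s := Finset.sum_nonneg fun i hi => Real.rpow_nonneg (hf i hi) s
  have hpow : (∑ i ∈ t, f i ^ s) ^ s⁻¹ ≤ (t.card : ℝ) ^ (s⁻¹ - 1) * ∑ i ∈ t, f i :=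
    calc (∑ i ∈ t, f i ^ s) ^ s⁻¹
      _ ≤ (t.card : ℝ) ^ (s⁻¹ - 1) * ∑ i ∈ t, (f i ^ s) ^ s⁻¹ :=
        Real.rpow_sum_le_const_mul_sum_rpow_of_nonneg t ((one_le_inv₀ hs₀).2 hs₁)
          fun i hi => Real.rpow_nonneg (hf i hi) s
      _ = (t.card : ℝ) ^ (s⁻¹ - 1) * ∑ i ∈ t, f i := by
        rw [Finset.sum_congr rfl fun i hi => Real.rpow_rpow_inv (hf i hi) hs₀.ne']
  calc ∑ i ∈ t, f i ^ s
    _ = ((∑ i ∈ t, f i ^ s) ^ s⁻¹) ^ s := (Real.rpow_inv_rpow hA hs₀.ne').symm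
    _ ≤ ((t.card : ℝ) ^ (s⁻¹ - 1) * ∑ i ∈ t, f i) ^ s := by gcongr
    _ = (t.card : ℝ) ^ (1 - s) * (∑ i ∈ t, f i) ^ s := by
      rw [Real.mul_rpow (by positivity) (Finset.sum_nonneg hf), ← Real.rpow_mul (by positivity),
        sub_mul, inv_mul_cancel₀ hs₀.ne', one_mul]

theorem rpow_add_rpow_le {s p q : ℝ} (hs₀ : 0 < s) (hs₁ : s ≤ 1) (hp : 0 ≤ p) (hq : 0 ≤ q) :
    p ^ s + q ^ s ≤ 2 ^ (1 - s) * (p + q) ^ s := by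
  simpa [Fin.sum_univ_two] using sum_rpow_le_card_rpow_mul_rpow_sum Finset.univ
    (f := ![p, q]) (by simp [Fin.forall_fin_two, hp, hq]) hs₀ hs₁

theorem rpow_add_rpow_add_rpow_le {s p q r : ℝ} (hs₀ : 0 < s) (hs₁ : s ≤ 1) (hp : 0 ≤ p)
    (hq : 0 ≤ q) (hr : 0 ≤ r) :
    p ^ s + q ^ s + r ^ s ≤ 3 ^ (1 - s) * (p + q + r) ^ s := by
  simpa [Fin.sum_univ_three] using sum_rpow_le_card_rpow_mul_rpow_sum Finset.univ
    (f := ![p, q, r]) (by simp [Fin.forall_fin_succ, hp, hq, hr]) hs₀ hs₁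

theorem measureReal_Icc_le_add {ν : Measure ℝ} [IsFiniteMeasure ν] (x y z : ℝ) :
    ν.real (Icc x z) ≤ ν.real (Icc x y) + ν.real (Icc y z) :=
  (measureReal_mono Icc_subset_Icc_union_Icc).trans (measureReal_union_le _ _)

section MassDistribution

variable {X : Type*} {s : ℝ} {C : ℝ≥0∞}

theorem exists_isOpen_superset_mul_ediam_rpow_le [PseudoEMetricSpace X] (hs : 0 ≤ s)
    (hC : C ≠ ⊤) {t : Set X} (ht : Metric.ediam t ≠ ⊤) {ε : ℝ≥0∞} (hε : ε ≠ 0) :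
    ∃ U, IsOpen U ∧ t ⊆ U ∧ C * Metric.ediam U ^ s ≤ C * Metric.ediam t ^ s + ε := by
  have hcont : Continuous fun δ : ℝ≥0 => C * (Metric.ediam t + 2 * δ) ^ s :=
    (ENNReal.continuous_const_mul hC).comp <| ENNReal.continuous_rpow_const.comp <|
      continuous_const.add <| (ENNReal.continuous_const_mul (by simp)).comp ENNReal.continuous_coe
  have hlt : C * (Metric.ediam t + 2 * (0 : ℝ≥0)) ^ s < C * Metric.ediam t ^ s + ε := by
    simpa using
      ENNReal.lt_add_right (ENNReal.mul_ne_top hC (ENNReal.rpow_ne_top_of_nonneg hs ht)) hε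
  have hsmall : ∀ᶠ δ : ℝ≥0 in 𝓝[>] 0,
      C * (Metric.ediam t + 2 * δ) ^ s < C * Metric.ediam t ^ s + ε :=
    nhdsWithin_le_nhds (hcont.continuousAt.eventually_lt_const hlt)
  obtain ⟨δ, hδ, hδ₀⟩ := (hsmall.and self_mem_nhdsWithin).exists
  refine ⟨Metric.thickening δ t, Metric.isOpen_thickening,
    Metric.self_subset_thickening (NNReal.coe_pos.2 hδ₀) t, le_trans ?_ hδ.le⟩
  gcongr
  exact Metric.ediam_thickening_le δ

variable [EMetricSpace X] [MeasurableSpace X] [BorelSpace X]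

-- Compactness replaces a weak limit of the measures `ν m`: an open cover of the intersection
-- already covers some `E m`.
theorem div_le_hausdorffMeasure_iInter {c : ℝ≥0∞} (hs : 0 < s) (hC : C ≠ ⊤) {E : ℕ → Set X}
    (hE : Antitone E) (hE_compact : ∀ m, IsCompact (E m)) {ν : ℕ → Measure X}
    (hmass : ∀ m, c ≤ ν m (E m)) (hν : ∀ m A, ν m A ≤ C * Metric.ediam A ^ s) :
    c / C ≤ μH[s] (⋂ m, E m) := by
  suffices hcover : ∀ t : ℕ → Set X, ⋂ m, E m ⊆ ⋃ i, t i → (∀ i, Metric.ediam (t i) ≤ 1) →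
      c ≤ C * ∑' i, Metric.ediam (t i) ^ s by
    rw [Measure.hausdorffMeasure_apply]
    refine le_trans ?_ (le_iSup₂ (1 : ℝ≥0∞) one_pos)
    refine le_iInf fun t => le_iInf fun htE => le_iInf fun ht => ENNReal.div_le_of_le_mul' ?_
    refine (hcover t htE ht).trans_eq (congrArg (C * ·) (tsum_congr fun i => ?_))
    rcases (t i).eq_empty_or_nonempty with hempty | hne
    · simp [hempty, hs]
    · rw [iSup_pos hne]
  intro t htE ht
  refine ENNReal.le_of_forall_pos_le_add fun ε hε _ => ?_
  obtain ⟨e, he₀, he⟩ := ENNReal.exists_pos_sum_of_countable (ENNReal.coe_ne_zero.2 hε.ne') ℕ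
  choose U hU_open htU hU using fun i => exists_isOpen_superset_mul_ediam_rpow_le hs.le hC
    (ne_top_of_le_ne_top ENNReal.one_ne_top (ht i)) (ENNReal.coe_ne_zero.2 (he₀ i).ne')
  obtain ⟨m, hm⟩ : ∃ m, E m ⊆ ⋃ i, U i :=
    exists_subset_nhds_of_isCompact hE.directed_ge hE_compact fun x hx =>
      (isOpen_iUnion hU_open).mem_nhds (iUnion_mono htU (htE hx))
  calc c ≤ ν m (E m) := hmass m
    _ ≤ ∑' i, ν m (U i) := (measure_mono hm).trans (measure_iUnion_le _)
    _ ≤ ∑' i, (C * Metric.ediam (t i) ^ s + e i) :=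
      ENNReal.tsum_le_tsum fun i => (hν m _).trans (hU i)
    _ = C * ∑' i, Metric.ediam (t i) ^ s + ∑' i, (e i : ℝ≥0∞) := by
      rw [ENNReal.tsum_add, ENNReal.tsum_mul_left]
    _ ≤ C * ∑' i, Metric.ediam (t i) ^ s + ε := by gcongr

end MassDistribution

section LimitSet

variable {g : ℕ → ℝ → ℝ} {n : ℕ}

/-- The cylinder `g_{p₁ + 1} ∘ ⋯ ∘ g_{p_m + 1} ([0, 1])`; the letters are shifted so that they
range over `Fin n` instead of `{1, …, n}`. -/
def wordCylinder (g : ℕ → ℝ → ℝ) {n m : ℕ} (p : Fin m → Fin n) : Set ℝ :=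
  wordComp g (List.ofFn fun i => (p i : ℕ) + 1) '' Icc 0 1

/-- The union of all cylinders of length `m`, the `m`-th approximation of `limitSet g n`. -/
def levelSet (g : ℕ → ℝ → ℝ) (n m : ℕ) : Set ℝ := ⋃ p : Fin m → Fin n, wordCylinder g p

theorem forall_mem_Icc_iff_exists_ofFn {w : List ℕ} {m : ℕ} :
    (w.length = m ∧ ∀ i ∈ w, 1 ≤ i ∧ i ≤ n) ↔
      ∃ p : Fin m → Fin n, List.ofFn (fun i => (p i : ℕ) + 1) = w := by
  constructor
  · rintro ⟨rfl, hw⟩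
    have hletter (i : Fin w.length) := hw _ (w.get_mem i)
    refine ⟨fun i => ⟨w.get i - 1, by have := hletter i; omega⟩, ?_⟩
    conv_rhs => rw [← List.ofFn_get w]
    exact congrArg List.ofFn (funext fun i => Nat.sub_add_cancel (hletter i).1)
  · rintro ⟨p, rfl⟩
    simp only [List.length_ofFn, List.forall_mem_ofFn_iff, true_and]
    exact fun i => ⟨Nat.le_add_left 1 _, (p i).2⟩

theorem limitSet_eq_iInter_levelSet : limitSet g n = ⋂ m, levelSet g n (m + 1) := by
  simp only [limitSet, forall_mem_Icc_iff_exists_ofFn]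
  refine iInter_congr fun m => ?_
  simp [levelSet, wordCylinder, iUnion_exists, iUnion_comm (ι := List ℕ)]

theorem levelSet_zero : levelSet g n 0 = Icc 0 1 := by
  simp [levelSet, wordCylinder, wordComp, iUnion_const]

theorem levelSet_succ (m : ℕ) :
    levelSet g n (m + 1) = ⋃ k : Fin n, g (k + 1) '' levelSet g n m := by
  ext x
  simp [levelSet, wordCylinder, Fin.exists_fin_succ_pi, List.ofFn_succ, wordComp]

theorem isCompact_levelSet (hg : ∀ k < n, Continuous (g (k + 1))) (m : ℕ) :
    IsCompact (levelSet g n m) := by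
  induction m with
  | zero => exact levelSet_zero ▸ isCompact_Icc
  | succ m ih =>
    rw [levelSet_succ]
    exact isCompact_iUnion fun k => ih.image (hg k k.2)

theorem antitone_levelSet (hg : ∀ k < n, MapsTo (g (k + 1)) (Icc 0 1) (Icc 0 1)) :
    Antitone (levelSet g n) := by
  refine antitone_nat_of_succ_le fun m => ?_
  induction m with
  | zero =>
    rw [levelSet_succ, levelSet_zero]
    exact iUnion_subset fun k => (hg k k.2).image_subset
  | succ m ih =>
    rw [levelSet_succ m, levelSet_succ (m + 1)]
    exact iUnion_mono fun k => image_mono ih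

theorem lipschitzWith_wordComp_ofFn {r : Fin n → ℝ≥0}
    (hg : ∀ k : Fin n, LipschitzWith (r k) (g (k + 1))) {m : ℕ} (p : Fin m → Fin n) :
    LipschitzWith (∏ i, r (p i)) (wordComp g (List.ofFn fun i => (p i : ℕ) + 1)) := by
  induction m with
  | zero => simpa [wordComp] using LipschitzWith.id
  | succ m ih =>
    rw [Fin.prod_univ_succ, List.ofFn_succ]
    exact (hg (p 0)).comp (ih _)

theorem ediam_wordCylinder_le {r : Fin n → ℝ≥0}
    (hg : ∀ k : Fin n, LipschitzWith (r k) (g (k + 1))) {m : ℕ} (p : Fin m → Fin n) :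
    Metric.ediam (wordCylinder g p) ≤ ∏ i, (r (p i) : ℝ≥0∞) := by
  simpa [wordCylinder, Real.ediam_Icc] using
    (lipschitzWith_wordComp_ofFn hg p).ediam_image_le (Icc 0 1)

theorem sum_ediam_wordCylinder_rpow_le_one {r : Fin n → ℝ≥0}
    (hg : ∀ k : Fin n, LipschitzWith (r k) (g (k + 1))) {s : ℝ} (hs : 0 ≤ s)
    (hsum : ∑ k, r k ^ s ≤ 1) (m : ℕ) :
    ∑ p : Fin m → Fin n, Metric.ediam (wordCylinder g p) ^ s ≤ 1 :=
  calc ∑ p : Fin m → Fin n, Metric.ediam (wordCylinder g p) ^ s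
    _ ≤ ∑ p : Fin m → Fin n, (∏ i, (r (p i) : ℝ≥0∞)) ^ s := by
      gcongr with p
      exact ediam_wordCylinder_le hg p
    _ = ((∑ k, r k ^ s : ℝ≥0) : ℝ≥0∞) ^ m := by
      simp only [← ENNReal.prod_rpow_of_nonneg hs, ENNReal.ofNNReal_finsetSum, Fintype.sum_pow,
        ENNReal.coe_rpow_of_nonneg _ hs]
    _ ≤ 1 := pow_le_one₀ zero_le (by exact_mod_cast hsum)

theorem hausdorffMeasure_limitSet_le_one {r : Fin n → ℝ≥0}
    (hg : ∀ k : Fin n, LipschitzWith (r k) (g (k + 1))) (hr : ∀ k, r k < 1) {s : ℝ} (hs : 0 ≤ s)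
    (hsum : ∑ k, r k ^ s ≤ 1) : μH[s] (limitSet g n) ≤ 1 := by
  set R : ℝ≥0 := Finset.univ.sup r
  have hR : R < 1 := (Finset.sup_lt_iff one_pos).2 fun k _ => hr k
  have hcylinder (m : ℕ) (p : Fin m → Fin n) : Metric.ediam (wordCylinder g p) ≤ (R : ℝ≥0∞) ^ m :=
    (ediam_wordCylinder_le hg p).trans <| by
      simpa using Finset.prod_le_pow_card Finset.univ (fun i => (r (p i) : ℝ≥0∞)) R
        fun i _ => by exact_mod_cast Finset.le_sup (Finset.mem_univ (p i))
  have hcover : ∀ᶠ m in atTop, limitSet g n ⊆ levelSet g n m := by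
    filter_upwards [eventually_ge_atTop 1] with m hm
    obtain ⟨m, rfl⟩ := Nat.exists_eq_add_of_le' hm
    exact limitSet_eq_iInter_levelSet.trans_subset (iInter_subset _ m)
  calc μH[s] (limitSet g n)
    _ ≤ liminf (fun m => ∑ p : Fin m → Fin n, Metric.ediam (wordCylinder g p) ^ s) atTop :=
      Measure.hausdorffMeasure_le_liminf_sum s _ (fun m => (R : ℝ≥0∞) ^ m)
        (ENNReal.tendsto_pow_atTop_nhds_zero_of_lt_one (by exact_mod_cast hR)) _
        (Eventually.of_forall hcylinder) hcover
    _ ≤ liminf (fun _ : ℕ => (1 : ℝ≥0∞)) atTop :=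
      liminf_le_liminf (Eventually.of_forall (sum_ediam_wordCylinder_rpow_le_one hg hs hsum))
    _ = 1 := liminf_const 1

end LimitSet

section Hutchinson

variable {g : ℕ → ℝ → ℝ} {p : ℕ → ℝ} {n : ℕ}

/-- The Hutchinson operator `ν ↦ ∑_{k < n} p_k · (g_{k+1})_* ν`, whose fixed probability measure
is the self-similar measure of the weighted system. -/
def hutchinson (g : ℕ → ℝ → ℝ) (p : ℕ → ℝ) (n : ℕ) (ν : Measure ℝ) : Measure ℝ :=
  ∑ k ∈ Finset.range n, ENNReal.ofReal (p k) • ν.map (g (k + 1))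

theorem hutchinson_apply (hg : ∀ k < n, Measurable (g (k + 1))) (ν : Measure ℝ) {S : Set ℝ}
    (hS : MeasurableSet S) :
    hutchinson g p n ν S =
      ∑ k ∈ Finset.range n, ENNReal.ofReal (p k) * ν (g (k + 1) ⁻¹' S) := by
  simp only [hutchinson, Measure.coe_finsetSum, Finset.sum_apply, Measure.smul_apply, smul_eq_mul]
  refine Finset.sum_congr rfl fun k hk => ?_
  rw [Measure.map_apply (hg k (Finset.mem_range.1 hk)) hS]

theorem hutchinson_real_apply (hg : ∀ k < n, Measurable (g (k + 1))) (hp : ∀ k < n, 0 ≤ p k)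
    (ν : Measure ℝ) [IsFiniteMeasure ν] {S : Set ℝ} (hS : MeasurableSet S) :
    (hutchinson g p n ν).real S = ∑ k ∈ Finset.range n, p k * ν.real (g (k + 1) ⁻¹' S) := by
  rw [measureReal_def, hutchinson_apply hg ν hS, ENNReal.toReal_sum fun k _ =>
    ENNReal.mul_ne_top ENNReal.ofReal_ne_top (measure_ne_top _ _)]
  refine Finset.sum_congr rfl fun k hk => ?_
  rw [ENNReal.toReal_mul, ENNReal.toReal_ofReal (hp k (Finset.mem_range.1 hk)), measureReal_def]

instance isFiniteMeasure_hutchinson (ν : Measure ℝ) [IsFiniteMeasure ν] :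
    IsFiniteMeasure (hutchinson g p n ν) := by
  refine ⟨?_⟩
  simp only [hutchinson, Measure.coe_finsetSum, Finset.sum_apply, Measure.smul_apply, smul_eq_mul]
  exact ENNReal.sum_lt_top.2 fun k _ =>
    ENNReal.mul_lt_top ENNReal.ofReal_lt_top (measure_lt_top _ _)

theorem isProbabilityMeasure_hutchinson (hg : ∀ k < n, Measurable (g (k + 1)))
    (hp : ∀ k < n, 0 ≤ p k) (hsum : ∑ k ∈ Finset.range n, p k = 1) (ν : Measure ℝ)
    [IsProbabilityMeasure ν] : IsProbabilityMeasure (hutchinson g p n ν) := by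
  refine ⟨?_⟩
  rw [hutchinson_apply hg ν MeasurableSet.univ]
  simp only [preimage_univ, measure_univ, mul_one]
  rw [← ENNReal.ofReal_sum_of_nonneg fun k hk => hp k (Finset.mem_range.1 hk), hsum,
    ENNReal.ofReal_one]

theorem hutchinson_compl_eq_zero (hg : ∀ k < n, Measurable (g (k + 1))) {ν : Measure ℝ}
    {A B : Set ℝ} (hB : MeasurableSet B) (hgAB : ∀ k < n, MapsTo (g (k + 1)) A B)
    (hν : ν Aᶜ = 0) : hutchinson g p n ν Bᶜ = 0 := by
  rw [hutchinson_apply hg ν hB.compl]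
  refine Finset.sum_eq_zero fun k hk => ?_
  rw [measure_mono_null _ hν, mul_zero]
  exact fun x hxB hxA => hxB (hgAB k (Finset.mem_range.1 hk) hxA)

theorem hutchinson_iterate_compl_levelSet (hg : ∀ k < n, Continuous (g (k + 1))) {ν : Measure ℝ}
    (hν : ν (Icc 0 1)ᶜ = 0) (m : ℕ) : ((hutchinson g p n)^[m] ν) (levelSet g n m)ᶜ = 0 := by
  induction m with
  | zero => rwa [levelSet_zero]
  | succ m ih =>
    rw [Function.iterate_succ_apply']
    refine hutchinson_compl_eq_zero (fun k hk => (hg k hk).measurable)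
      (isCompact_levelSet hg _).measurableSet (fun k hk x hx => ?_) ih
    rw [levelSet_succ]
    exact mem_iUnion.2 ⟨⟨k, hk⟩, mem_image_of_mem _ hx⟩

end Hutchinson

section GrowthConst

/-- The constant `K` for which `K t ^ s` bounds the mass of end intervals of length `t`. It is the
solution of `2 ^ (1 - s) * N + (K - N) * ρ ^ s = K` with `N = n ^ (1 - s)`. -/
def growthConst (ρ s : ℝ) (n : ℕ) : ℝ := (n : ℝ) ^ (1 - s) * (2 ^ (1 - s) - ρ ^ s) / (1 - ρ ^ s)

variable {ρ s : ℝ} {n : ℕ}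

theorem growthConst_eq (hρ₀ : 0 ≤ ρ) (hρ₁ : ρ < 1) (hs₀ : 0 < s) :
    2 ^ (1 - s) * (n : ℝ) ^ (1 - s) + (growthConst ρ s n - (n : ℝ) ^ (1 - s)) * ρ ^ s =
      growthConst ρ s n := by
  have hρs : 1 - ρ ^ s ≠ 0 := (sub_pos.2 (Real.rpow_lt_one hρ₀ hρ₁ hs₀)).ne'
  rw [growthConst]
  field_simp
  ring

theorem rpow_le_growthConst (hρ₀ : 0 ≤ ρ) (hρ₁ : ρ < 1) (hs₀ : 0 < s) (hs₁ : s ≤ 1) :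
    (n : ℝ) ^ (1 - s) ≤ growthConst ρ s n := by
  have hρs : 0 < 1 - ρ ^ s := sub_pos.2 (Real.rpow_lt_one hρ₀ hρ₁ hs₀)
  have htwo : (1 : ℝ) ≤ 2 ^ (1 - s) := Real.one_le_rpow one_le_two (sub_nonneg.2 hs₁)
  rw [growthConst, le_div_iff₀ hρs]
  gcongr

theorem one_le_growthConst (hρ₀ : 0 ≤ ρ) (hρ₁ : ρ < 1) (hs₀ : 0 < s) (hs₁ : s ≤ 1) (hn : 1 ≤ n) :
    1 ≤ growthConst ρ s n :=
  (Real.one_le_rpow (by exact_mod_cast hn) (sub_nonneg.2 hs₁)).trans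
    (rpow_le_growthConst hρ₀ hρ₁ hs₀ hs₁)

theorem rpow_mul_add_growthConst_mul_le (hρ₀ : 0 ≤ ρ) (hρ₁ : ρ < 1) (hs₀ : 0 < s) (hs₁ : s ≤ 1)
    {u v : ℝ} (hu : 0 ≤ u) (hv : 0 ≤ v) (hvu : v ≤ ρ * (u + v)) :
    (n : ℝ) ^ (1 - s) * u ^ s + growthConst ρ s n * v ^ s ≤ growthConst ρ s n * (u + v) ^ s := by
  set N := (n : ℝ) ^ (1 - s)
  set K := growthConst ρ s n
  have hNK : 0 ≤ K - N := sub_nonneg.2 (rpow_le_growthConst hρ₀ hρ₁ hs₀ hs₁)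
  calc N * u ^ s + K * v ^ s
    _ = N * (u ^ s + v ^ s) + (K - N) * v ^ s := by ring
    _ ≤ N * (2 ^ (1 - s) * (u + v) ^ s) + (K - N) * (ρ * (u + v)) ^ s := by
      gcongr
      exact rpow_add_rpow_le hs₀ hs₁ hu hv
    _ = (2 ^ (1 - s) * N + (K - N) * ρ ^ s) * (u + v) ^ s := by
      rw [Real.mul_rpow hρ₀ (add_nonneg hu hv)]
      ring
    _ = K * (u + v) ^ s := by rw [growthConst_eq hρ₀ hρ₁ hs₀]

theorem tendsto_growthConst {h : ℕ → ℝ} (hρ₁ : ρ < 1) (hh : Tendsto h atTop (𝓝 1))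
    (hpow : Tendsto (fun n : ℕ => (n : ℝ) ^ (1 - h n)) atTop (𝓝 1)) :
    Tendsto (fun n => growthConst ρ (h n) n) atTop (𝓝 1) := by
  have htwo : Tendsto (fun n => (2 : ℝ) ^ (1 - h n)) atTop (𝓝 1) := by
    simpa using (tendsto_const_nhds (x := (2 : ℝ))).rpow (hh.const_sub 1) (.inl two_ne_zero)
  have hρ : Tendsto (fun n => ρ ^ h n) atTop (𝓝 ρ) := by
    simpa using (tendsto_const_nhds (x := ρ)).rpow hh (.inr one_pos)
  have hρ' : 1 - ρ ≠ 0 := (sub_pos.2 hρ₁).ne'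
  simpa [growthConst, div_self hρ', Pi.div_def] using
    (hpow.mul (htwo.sub hρ)).div (hρ.const_sub 1) hρ'

end GrowthConst

section AffineSystem

variable {b : ℕ → ℝ} {n : ℕ} {s : ℝ} {ν : Measure ℝ}

theorem continuous_gAff (b : ℕ → ℝ) (k : ℕ) : Continuous (gAff b k) := by
  unfold gAff
  fun_prop

theorem lipschitzWith_gAff_succ {k : ℕ} (hk : b (k + 1) ≤ b k) :
    LipschitzWith (b k - b (k + 1)).toNNReal (gAff b (k + 1)) := by
  refine LipschitzWith.of_dist_le_mul fun x y => le_of_eq ?_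
  rw [Real.coe_toNNReal _ (sub_nonneg.2 hk), Real.dist_eq, Real.dist_eq,
    ← abs_of_nonneg (sub_nonneg.2 hk), ← abs_mul, ← abs_neg]
  simp only [gAff, Nat.add_sub_cancel]
  ring_nf

theorem gAff_succ_preimage_Icc {k : ℕ} (hk : b (k + 1) < b k) (x y : ℝ) :
    gAff b (k + 1) ⁻¹' Icc x y =
      Icc ((b k - y) / (b k - b (k + 1))) ((b k - x) / (b k - b (k + 1))) := by
  ext z
  have hgap : 0 < b k - b (k + 1) := sub_pos.2 hk
  simp only [mem_preimage, gAff, Nat.add_sub_cancel, mem_Icc, div_le_iff₀ hgap, le_div_iff₀ hgap]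
  constructor <;> rintro ⟨hx, hy⟩ <;> constructor <;> linarith

theorem mapsTo_gAff_succ_Ioo {k : ℕ} (hk : b (k + 1) < b k) :
    MapsTo (gAff b (k + 1)) (Ioo 0 1) (Ioo (b (k + 1)) (b k)) := by
  rintro x ⟨hx₀, hx₁⟩
  simp only [gAff, Nat.add_sub_cancel]
  constructor <;> nlinarith

theorem mapsTo_gAff_succ_Icc {k : ℕ} (hk : b (k + 1) ≤ b k) :
    MapsTo (gAff b (k + 1)) (Icc 0 1) (Icc (b (k + 1)) (b k)) := by
  rintro x ⟨hx₀, hx₁⟩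
  simp only [gAff, Nat.add_sub_cancel]
  constructor <;> nlinarith

theorem hausdorffMeasure_limitSet_gAff_le_one (hb : Antitone b) (hb₀ : b 0 = 1)
    (hpos : ∀ k, 0 < b k) (hs : 0 ≤ s)
    (hsum : ∑ k ∈ Finset.range n, (b k - b (k + 1)) ^ s ≤ 1) :
    μH[s] (limitSet (gAff b) n) ≤ 1 := by
  have hgap (k : ℕ) : 0 ≤ b k - b (k + 1) := sub_nonneg.2 (hb k.le_succ)
  refine hausdorffMeasure_limitSet_le_one (r := fun k : Fin n => (b k - b (k + 1)).toNNReal)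
    (fun k => lipschitzWith_gAff_succ (hb (Nat.le_succ _)))
    (fun k => Real.toNNReal_lt_one.2 ?_) hs ?_
  · linarith [hpos (k + 1), hb (k : ℕ).zero_le]
  · rw [← NNReal.coe_le_coe]
    push_cast
    simp only [Real.coe_toNNReal _ (hgap _)]
    rwa [Fin.sum_univ_eq_sum_range fun k => (b k - b (k + 1)) ^ s]

theorem sum_sub_succ_rpow_le (hb : Antitone b) (hs₀ : 0 < s) (hs₁ : s ≤ 1) {i j : ℕ}
    (hij : i ≤ j) (hjn : j ≤ n) :
    ∑ k ∈ Finset.Ico i j, (b k - b (k + 1)) ^ s ≤ (n : ℝ) ^ (1 - s) * (b i - b j) ^ s := by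
  have htelescope : ∑ k ∈ Finset.Ico i j, (b k - b (k + 1)) = b i - b j := by
    simpa using congrArg Neg.neg (Finset.sum_Ico_sub b hij)
  calc ∑ k ∈ Finset.Ico i j, (b k - b (k + 1)) ^ s
    _ ≤ ((Finset.Ico i j).card : ℝ) ^ (1 - s) * (b i - b j) ^ s := htelescope ▸
      sum_rpow_le_card_rpow_mul_rpow_sum _ (fun k _ => sub_nonneg.2 (hb k.le_succ)) hs₀ hs₁
    _ ≤ (n : ℝ) ^ (1 - s) * (b i - b j) ^ s := by
      have : 0 ≤ b i - b j := sub_nonneg.2 (hb hij)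
      gcongr
      rw [Nat.card_Ico]
      omega

theorem exists_lt_le_of_strictAnti (hb : StrictAnti b) {y : ℝ} (hny : b n < y) (hy : y ≤ b 0) :
    ∃ i < n, b (i + 1) < y ∧ y ≤ b i := by
  obtain ⟨i, hi, hi'⟩ := Nat.exists_not_and_succ_of_not_zero_of_exists (p := fun i => b i < y)
    hy.not_gt ⟨n, hny⟩
  have hyi : y ≤ b i := not_lt.1 hi
  exact ⟨i, hb.lt_iff_gt.1 (hny.trans_le hyi), hi', hyi⟩

/-- The Hutchinson operator of the affine system `gAff b` with the weights
`(b k - b (k + 1)) ^ s`, which sum to one when `s` is the similarity dimension. -/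
def moranStep (b : ℕ → ℝ) (n : ℕ) (s : ℝ) : Measure ℝ → Measure ℝ :=
  hutchinson (gAff b) (fun k => (b k - b (k + 1)) ^ s) n

instance isFiniteMeasure_moranStep [IsFiniteMeasure ν] : IsFiniteMeasure (moranStep b n s ν) :=
  isFiniteMeasure_hutchinson ν

theorem moranStep_real_eq_sum (hb : StrictAnti b) [IsFiniteMeasure ν] (hν : ν (Ioo 0 1)ᶜ = 0)
    {t : Finset ℕ} (ht : t ⊆ Finset.range n) {S : Set ℝ} (hS : MeasurableSet S)
    (hdisj : ∀ k < n, k ∉ t → Disjoint S (Ioo (b (k + 1)) (b k))) :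
    (moranStep b n s ν).real S =
      ∑ k ∈ t, (b k - b (k + 1)) ^ s * ν.real (gAff b (k + 1) ⁻¹' S) := by
  have hweight (k : ℕ) : 0 ≤ (b k - b (k + 1)) ^ s :=
    Real.rpow_nonneg (sub_nonneg.2 (hb.antitone k.le_succ)) s
  rw [moranStep, hutchinson_real_apply (fun k _ => (continuous_gAff b _).measurable)
    (fun k _ => hweight k) ν hS]
  refine (Finset.sum_subset ht fun k hk hkt => mul_eq_zero_of_right _ ?_).symm
  rw [measureReal_def, measure_mono_null _ hν, ENNReal.toReal_zero]
  exact fun x hxS hx => (hdisj k (Finset.mem_range.1 hk) hkt).notMem_of_mem_left hxS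
    (mapsTo_gAff_succ_Ioo (hb k.lt_succ_self) hx)

theorem moranStep_real_Icc_of_mem_gap (hb : StrictAnti b) [IsFiniteMeasure ν]
    (hν : ν (Ioo 0 1)ᶜ = 0) {i : ℕ} (hi : i < n) {x y : ℝ} (hx : b (i + 1) ≤ x) (hy : y ≤ b i) :
    (moranStep b n s ν).real (Icc x y) = (b i - b (i + 1)) ^ s *
      ν.real (Icc ((b i - y) / (b i - b (i + 1))) ((b i - x) / (b i - b (i + 1)))) := by
  rw [moranStep_real_eq_sum hb hν (Finset.singleton_subset_iff.2 (Finset.mem_range.2 hi))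
    measurableSet_Icc, Finset.sum_singleton, gAff_succ_preimage_Icc (hb i.lt_succ_self)]
  intro k _ hki
  refine disjoint_left.2 fun z hz hzk => ?_
  rcases lt_or_gt_of_ne (Finset.notMem_singleton.1 hki) with hlt | hgt
  · exact (hz.2.trans (hy.trans (hb.antitone hlt))).not_gt hzk.1
  · exact ((hb.antitone hgt).trans (hx.trans hz.1)).not_gt hzk.2

theorem moranStep_real_Icc_eq_zero (hb : StrictAnti b) [IsFiniteMeasure ν]
    (hν : ν (Ioo 0 1)ᶜ = 0) {x y : ℝ} (hy : y ≤ b n) :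
    (moranStep b n s ν).real (Icc x y) = 0 := by
  rw [moranStep_real_eq_sum hb hν (Finset.empty_subset _) measurableSet_Icc, Finset.sum_empty]
  exact fun k hk _ => disjoint_left.2 fun z hz hzk =>
    (hz.2.trans (hy.trans (hb.antitone hk))).not_gt hzk.1

theorem moranStep_real_Icc_apply_apply_le (hb : StrictAnti b) (hs₀ : 0 < s) (hs₁ : s ≤ 1)
    [IsProbabilityMeasure ν] (hν : ν (Ioo 0 1)ᶜ = 0) {i j : ℕ} (hij : i ≤ j) (hjn : j ≤ n) :
    (moranStep b n s ν).real (Icc (b j) (b i)) ≤ (n : ℝ) ^ (1 - s) * (b i - b j) ^ s := by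
  have hrange : Finset.Ico i j ⊆ Finset.range n := fun k hk =>
    Finset.mem_range.2 ((Finset.mem_Ico.1 hk).2.trans_le hjn)
  rw [moranStep_real_eq_sum hb hν hrange measurableSet_Icc]
  · refine (Finset.sum_le_sum fun k _ => ?_).trans
      (sum_sub_succ_rpow_le hb.antitone hs₀ hs₁ hij hjn)
    exact mul_le_of_le_one_right (Real.rpow_nonneg (sub_nonneg.2 (hb.antitone k.le_succ)) s)
      measureReal_le_one
  · intro k _ hk
    refine disjoint_left.2 fun z hz hzk => ?_
    rcases lt_or_ge k i with hki | hik
    · exact (hz.2.trans (hb.antitone hki)).not_gt hzk.1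
    · have hjk : j ≤ k := by simpa [hik] using hk
      exact ((hb.antitone hjk).trans hz.1).not_gt hzk.2

theorem moranStep_real_Icc_apply_le_of_le (hb : StrictAnti b) (hs₀ : 0 < s) (hs₁ : s ≤ 1)
    [IsProbabilityMeasure ν] (hν : ν (Ioo 0 1)ᶜ = 0) {i : ℕ} (hi : i ≤ n) {x : ℝ}
    (hx : x ≤ b n) :
    (moranStep b n s ν).real (Icc x (b i)) ≤ (n : ℝ) ^ (1 - s) * (b i - x) ^ s :=
  calc (moranStep b n s ν).real (Icc x (b i))
    _ ≤ (moranStep b n s ν).real (Icc x (b n)) + (moranStep b n s ν).real (Icc (b n) (b i)) :=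
      measureReal_Icc_le_add x (b n) (b i)
    _ ≤ (n : ℝ) ^ (1 - s) * (b i - b n) ^ s := by
      rw [moranStep_real_Icc_eq_zero hb hν le_rfl, zero_add]
      exact moranStep_real_Icc_apply_apply_le hb hs₀ hs₁ hν hi le_rfl
    _ ≤ (n : ℝ) ^ (1 - s) * (b i - x) ^ s := by
      have : 0 ≤ b i - b n := sub_nonneg.2 (hb.antitone hi)
      gcongr

end AffineSystem

section GrowthBound

/-- Growth bounds of exponent `s` for a probability measure on `(0, 1)`: the constant `K` controls
intervals sharing an endpoint with `[0, 1]`, and the constant `L` controls arbitrary subintervals.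
They are kept apart because the bound for end intervals propagates under `moranStep` by itself. -/
structure HasGrowthBound (s K L : ℝ) (ν : Measure ℝ) : Prop where
  isProbabilityMeasure : IsProbabilityMeasure ν
  measure_compl_Ioo : ν (Ioo 0 1)ᶜ = 0
  real_Icc_zero_le : ∀ ⦃t : ℝ⦄, 0 ≤ t → t ≤ 1 → ν.real (Icc 0 t) ≤ K * t ^ s
  real_Icc_one_le : ∀ ⦃t : ℝ⦄, 0 ≤ t → t ≤ 1 → ν.real (Icc t 1) ≤ K * (1 - t) ^ s
  real_Icc_le : ∀ ⦃x y : ℝ⦄, 0 ≤ x → x ≤ y → y ≤ 1 → ν.real (Icc x y) ≤ L * (y - x) ^ s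

theorem rpow_mul_le_of_le_mul_div_rpow {a d K s v : ℝ} (ha : 0 < a) (hd : 0 ≤ d)
    (hv : v ≤ K * (d / a) ^ s) : a ^ s * v ≤ K * d ^ s := by
  rw [Real.div_rpow hd ha.le, mul_div_assoc', le_div_iff₀ (Real.rpow_pos_of_pos ha s)] at hv
  linarith

theorem hasGrowthBound_volume_restrict_Ioo {s K L : ℝ} (hs₁ : s ≤ 1) (hK : 1 ≤ K) (hL : 1 ≤ L) :
    HasGrowthBound s K L (volume.restrict (Ioo 0 1)) := by
  have hIcc {M x y : ℝ} (hM : 1 ≤ M) (hx : 0 ≤ x) (hxy : x ≤ y) (hy : y ≤ 1) :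
      (volume.restrict (Ioo (0 : ℝ) 1)).real (Icc x y) ≤ M * (y - x) ^ s :=
    calc (volume.restrict (Ioo (0 : ℝ) 1)).real (Icc x y)
      _ ≤ volume.real (Icc x y) := by
        rw [measureReal_restrict_apply measurableSet_Icc]
        exact measureReal_mono inter_subset_left isCompact_Icc.measure_ne_top
      _ = y - x := Real.volume_real_Icc_of_le hxy
      _ ≤ (y - x) ^ s := Real.self_le_rpow_of_le_one (by linarith) (by linarith) hs₁
      _ ≤ M * (y - x) ^ s :=
        le_mul_of_one_le_left (Real.rpow_nonneg (sub_nonneg.2 hxy) s) hM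
  exact {
    isProbabilityMeasure := ⟨by simp⟩
    measure_compl_Ioo := by simp
    real_Icc_zero_le := fun t ht₀ ht₁ => by simpa using hIcc hK le_rfl ht₀ ht₁
    real_Icc_one_le := fun t ht₀ ht₁ => hIcc hK ht₀ ht₁ le_rfl
    real_Icc_le := fun x y => hIcc hL }

namespace HasGrowthBound

variable {s K L : ℝ} {ν : Measure ℝ} {b : ℕ → ℝ} {n : ℕ}

theorem measure_le_mul_ediam_rpow (hν : HasGrowthBound s K L ν) (hs : 0 ≤ s) (hL : 0 ≤ L)
    (A : Set ℝ) : ν A ≤ ENNReal.ofReal L * Metric.ediam A ^ s := by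
  have := hν.isProbabilityMeasure
  set B := A ∩ Ioo 0 1
  have hAB : ν A ≤ ν B := (measure_inter_conull hν.measure_compl_Ioo).ge
  rcases B.eq_empty_or_nonempty with hempty | ⟨z, hz⟩
  · simp [nonpos_iff_eq_zero.1 (hAB.trans_eq (hempty ▸ measure_empty))]
  have hB₀ : BddBelow B := bddBelow_Ioo.mono inter_subset_right
  have hB₁ : BddAbove B := bddAbove_Ioo.mono inter_subset_right
  have hinf : 0 ≤ sInf B := le_csInf ⟨z, hz⟩ fun w hw => hw.2.1.le
  have hsup : sSup B ≤ 1 := csSup_le ⟨z, hz⟩ fun w hw => hw.2.2.le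
  have hle : sInf B ≤ sSup B := (csInf_le hB₀ hz).trans (le_csSup hB₁ hz)
  calc ν A ≤ ν (Icc (sInf B) (sSup B)) :=
        hAB.trans (measure_mono (subset_Icc_csInf_csSup hB₀ hB₁))
    _ = ENNReal.ofReal (ν.real (Icc (sInf B) (sSup B))) := (ofReal_measureReal).symm
    _ ≤ ENNReal.ofReal (L * (sSup B - sInf B) ^ s) :=
      ENNReal.ofReal_le_ofReal (hν.real_Icc_le hinf hle hsup)
    _ = ENNReal.ofReal L * Metric.ediam B ^ s := by
      rw [ENNReal.ofReal_mul hL, ← ENNReal.ofReal_rpow_of_nonneg (sub_nonneg.2 hle) hs,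
        Real.ediam_eq (isBounded_iff_bddBelow_bddAbove.2 ⟨hB₀, hB₁⟩)]
    _ ≤ ENNReal.ofReal L * Metric.ediam A ^ s := by
      gcongr
      exact inter_subset_left

-- Since `gAff b (i + 1)` reverses orientation, the bound at the right end of `[0, 1]` becomes the
-- bound at the left end of `[b (i + 1), b i]` and vice versa.
theorem moranStep_real_Icc_succ_le (hν : HasGrowthBound s K L ν) (hb : StrictAnti b) {i : ℕ}
    (hi : i < n) {y : ℝ} (hyi : b (i + 1) ≤ y) (hy : y ≤ b i) :
    (moranStep b n s ν).real (Icc (b (i + 1)) y) ≤ K * (y - b (i + 1)) ^ s := by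
  have := hν.isProbabilityMeasure
  have hgap : 0 < b i - b (i + 1) := sub_pos.2 (hb i.lt_succ_self)
  rw [moranStep_real_Icc_of_mem_gap hb hν.measure_compl_Ioo hi le_rfl hy, div_self hgap.ne']
  refine rpow_mul_le_of_le_mul_div_rpow hgap (sub_nonneg.2 hyi) ?_
  convert hν.real_Icc_one_le (div_nonneg (sub_nonneg.2 hy) hgap.le)
    ((div_le_one hgap).2 (by linarith)) using 3
  field_simp
  ring

theorem moranStep_real_Icc_apply_le (hν : HasGrowthBound s K L ν) (hb : StrictAnti b) {i : ℕ}
    (hi : i < n) {x : ℝ} (hx : b (i + 1) ≤ x) (hxi : x ≤ b i) :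
    (moranStep b n s ν).real (Icc x (b i)) ≤ K * (b i - x) ^ s := by
  have := hν.isProbabilityMeasure
  have hgap : 0 < b i - b (i + 1) := sub_pos.2 (hb i.lt_succ_self)
  rw [moranStep_real_Icc_of_mem_gap hb hν.measure_compl_Ioo hi hx le_rfl, sub_self, zero_div]
  exact rpow_mul_le_of_le_mul_div_rpow hgap (sub_nonneg.2 hxi) <|
    hν.real_Icc_zero_le (div_nonneg (sub_nonneg.2 hxi) hgap.le)
      ((div_le_one hgap).2 (by linarith))

theorem moranStep_real_Icc_le_of_mem_gap (hν : HasGrowthBound s K L ν) (hb : StrictAnti b) {i : ℕ}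
    (hi : i < n) {x y : ℝ} (hx : b (i + 1) ≤ x) (hxy : x ≤ y) (hy : y ≤ b i) :
    (moranStep b n s ν).real (Icc x y) ≤ L * (y - x) ^ s := by
  have := hν.isProbabilityMeasure
  have hgap : 0 < b i - b (i + 1) := sub_pos.2 (hb i.lt_succ_self)
  rw [moranStep_real_Icc_of_mem_gap hb hν.measure_compl_Ioo hi hx hy]
  refine rpow_mul_le_of_le_mul_div_rpow hgap (sub_nonneg.2 hxy) ?_
  have hle : (b i - y) / (b i - b (i + 1)) ≤ (b i - x) / (b i - b (i + 1)) := by gcongr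
  have hle₁ : (b i - x) / (b i - b (i + 1)) ≤ 1 := (div_le_one hgap).2 (by linarith)
  convert hν.real_Icc_le (div_nonneg (sub_nonneg.2 hy) hgap.le) hle hle₁ using 3
  field_simp
  ring

theorem exists_moranStep_real_Icc_le (hν : HasGrowthBound s K L ν) (hb : StrictAnti b)
    (hs₀ : 0 < s) (hs₁ : s ≤ 1) (hNK : (n : ℝ) ^ (1 - s) ≤ K) {i : ℕ} (hi : i ≤ n) {x : ℝ}
    (hx : x ≤ b i) :
    ∃ j, i ≤ j ∧ x ≤ b j ∧ (moranStep b n s ν).real (Icc x (b i)) ≤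
      (n : ℝ) ^ (1 - s) * (b i - b j) ^ s + K * (b j - x) ^ s := by
  have := hν.isProbabilityMeasure
  rcases le_or_gt x (b n) with hxn | hxn
  · refine ⟨i, le_rfl, hx, ?_⟩
    calc (moranStep b n s ν).real (Icc x (b i))
      _ ≤ (n : ℝ) ^ (1 - s) * (b i - x) ^ s :=
        moranStep_real_Icc_apply_le_of_le hb hs₀ hs₁ hν.measure_compl_Ioo hi hxn
      _ ≤ K * (b i - x) ^ s := by
        have : 0 ≤ b i - x := sub_nonneg.2 hx
        gcongr
      _ = (n : ℝ) ^ (1 - s) * (b i - b i) ^ s + K * (b i - x) ^ s := by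
        rw [sub_self, Real.zero_rpow hs₀.ne', mul_zero, zero_add]
  · obtain ⟨j, hj, hjx, hxj⟩ :=
      exists_lt_le_of_strictAnti hb hxn (hx.trans (hb.antitone (Nat.zero_le i)))
    have hij : i ≤ j := Nat.lt_succ_iff.1 (hb.lt_iff_gt.1 (hjx.trans_le hx))
    refine ⟨j, hij, hxj, (measureReal_Icc_le_add x (b j) (b i)).trans ?_⟩
    rw [add_comm]
    exact add_le_add
      (moranStep_real_Icc_apply_apply_le hb hs₀ hs₁ hν.measure_compl_Ioo hij hj.le)
      (hν.moranStep_real_Icc_apply_le hb hj hjx.le hxj)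

theorem moranStep_real_Icc_le (hν : HasGrowthBound s K (3 ^ (1 - s) * K) ν) (hb : StrictAnti b)
    (hs₀ : 0 < s) (hs₁ : s ≤ 1) (hNK : (n : ℝ) ^ (1 - s) ≤ K) {x y : ℝ} (hxy : x ≤ y)
    (hy : y ≤ b 0) :
    (moranStep b n s ν).real (Icc x y) ≤ 3 ^ (1 - s) * K * (y - x) ^ s := by
  have := hν.isProbabilityMeasure
  have hK : 0 ≤ K := (Real.rpow_nonneg n.cast_nonneg _).trans hNK
  rcases le_or_gt y (b n) with hyn | hyn
  · rw [moranStep_real_Icc_eq_zero hb hν.measure_compl_Ioo hyn]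
    have : 0 ≤ y - x := sub_nonneg.2 hxy
    positivity
  obtain ⟨i, hi, hiy, hyi⟩ := exists_lt_le_of_strictAnti hb hyn hy
  rcases le_or_gt (b (i + 1)) x with hix | hxi
  · exact hν.moranStep_real_Icc_le_of_mem_gap hb hi hix hxy hyi
  obtain ⟨j, hij, hxj, hleft⟩ := hν.exists_moranStep_real_Icc_le hb hs₀ hs₁ hNK hi hxi.le
  have hu : 0 ≤ b (i + 1) - b j := sub_nonneg.2 (hb.antitone hij)
  calc (moranStep b n s ν).real (Icc x y)
    _ ≤ (moranStep b n s ν).real (Icc x (b (i + 1))) +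
        (moranStep b n s ν).real (Icc (b (i + 1)) y) := measureReal_Icc_le_add x (b (i + 1)) y
    _ ≤ (n : ℝ) ^ (1 - s) * (b (i + 1) - b j) ^ s + K * (b j - x) ^ s +
        K * (y - b (i + 1)) ^ s :=
      add_le_add hleft (hν.moranStep_real_Icc_succ_le hb hi hiy.le hyi)
    _ ≤ K * (b (i + 1) - b j) ^ s + K * (b j - x) ^ s + K * (y - b (i + 1)) ^ s := by gcongr
    _ = K * ((b (i + 1) - b j) ^ s + (b j - x) ^ s + (y - b (i + 1)) ^ s) := by ring
    _ ≤ K * (3 ^ (1 - s) * (b (i + 1) - b j + (b j - x) + (y - b (i + 1))) ^ s) := by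
      gcongr
      exact rpow_add_rpow_add_rpow_le hs₀ hs₁ hu (sub_nonneg.2 hxj) (sub_nonneg.2 hiy.le)
    _ = 3 ^ (1 - s) * K * (y - x) ^ s := by ring_nf

end HasGrowthBound

/-- A partition of `(0, 1]` by the points `b k` in which every gap `[b (k + 1), b k]` takes up at
most the fraction `ρ < 1` of `[0, b k]`, and the first gap at least the fraction `1 - ρ` of
`[0, 1]`. This is the quantitative content of (C2). -/
structure HasControlledGaps (b : ℕ → ℝ) (ρ : ℝ) : Prop where
  strictAnti : StrictAnti b
  apply_zero : b 0 = 1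
  pos : ∀ k, 0 < b k
  lt_one : ρ < 1
  sub_succ_le : ∀ k, b k - b (k + 1) ≤ ρ * b k
  apply_one_le : b 1 ≤ ρ

namespace HasControlledGaps

variable {b : ℕ → ℝ} {ρ s L : ℝ} {n : ℕ} {ν : Measure ℝ}

theorem ratio_nonneg (hρ : HasControlledGaps b ρ) : 0 ≤ ρ := (hρ.pos 1).le.trans hρ.apply_one_le

theorem apply_le_one (hρ : HasControlledGaps b ρ) (k : ℕ) : b k ≤ 1 :=
  (hρ.strictAnti.antitone k.zero_le).trans_eq hρ.apply_zero

theorem moranStep_real_Icc_zero_le (hρ : HasControlledGaps b ρ)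
    (hν : HasGrowthBound s (growthConst ρ s n) L ν) (hs₀ : 0 < s) (hs₁ : s ≤ 1) {t : ℝ}
    (ht₀ : 0 ≤ t) (ht₁ : t ≤ 1) :
    (moranStep b n s ν).real (Icc 0 t) ≤ growthConst ρ s n * t ^ s := by
  have := hν.isProbabilityMeasure
  have hb := hρ.strictAnti
  rcases le_or_gt t (b n) with htn | htn
  · rw [moranStep_real_Icc_eq_zero hb hν.measure_compl_Ioo htn]
    exact mul_nonneg ((Real.rpow_nonneg n.cast_nonneg _).trans
      (rpow_le_growthConst hρ.ratio_nonneg hρ.lt_one hs₀ hs₁)) (Real.rpow_nonneg ht₀ s)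
  obtain ⟨i, hi, hit, hti⟩ := exists_lt_le_of_strictAnti hb htn (ht₁.trans_eq hρ.apply_zero.symm)
  have hv : t - b (i + 1) ≤ ρ * (b (i + 1) + (t - b (i + 1))) := by
    nlinarith [hρ.sub_succ_le i, hρ.lt_one]
  calc (moranStep b n s ν).real (Icc 0 t)
    _ ≤ (moranStep b n s ν).real (Icc 0 (b (i + 1))) +
        (moranStep b n s ν).real (Icc (b (i + 1)) t) := measureReal_Icc_le_add 0 (b (i + 1)) t
    _ ≤ (n : ℝ) ^ (1 - s) * b (i + 1) ^ s + growthConst ρ s n * (t - b (i + 1)) ^ s := by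
      refine add_le_add ?_ (hν.moranStep_real_Icc_succ_le hb hi hit.le hti)
      simpa using moranStep_real_Icc_apply_le_of_le hb hs₀ hs₁ hν.measure_compl_Ioo hi
        (hρ.pos n).le
    _ ≤ growthConst ρ s n * (b (i + 1) + (t - b (i + 1))) ^ s :=
      rpow_mul_add_growthConst_mul_le hρ.ratio_nonneg hρ.lt_one hs₀ hs₁ (hρ.pos _).le
        (sub_nonneg.2 hit.le) hv
    _ = growthConst ρ s n * t ^ s := by rw [add_sub_cancel]

theorem moranStep_real_Icc_one_le (hρ : HasControlledGaps b ρ)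
    (hν : HasGrowthBound s (growthConst ρ s n) L ν) (hs₀ : 0 < s) (hs₁ : s ≤ 1) {t : ℝ}
    (ht₀ : 0 ≤ t) (ht₁ : t ≤ 1) :
    (moranStep b n s ν).real (Icc t 1) ≤ growthConst ρ s n * (1 - t) ^ s := by
  obtain ⟨j, -, htj, hle⟩ := hν.exists_moranStep_real_Icc_le hρ.strictAnti hs₀ hs₁
    (rpow_le_growthConst hρ.ratio_nonneg hρ.lt_one hs₀ hs₁) n.zero_le
    (ht₁.trans_eq hρ.apply_zero.symm)
  rw [hρ.apply_zero] at hle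
  rcases j.eq_zero_or_pos with rfl | hj
  · simpa [hρ.apply_zero, hs₀.ne'] using hle
  have hbj : b j ≤ ρ := (hρ.strictAnti.antitone hj).trans hρ.apply_one_le
  have hv : b j - t ≤ ρ * (1 - b j + (b j - t)) := by nlinarith [hρ.lt_one]
  simpa using hle.trans <| rpow_mul_add_growthConst_mul_le hρ.ratio_nonneg hρ.lt_one hs₀ hs₁
    (sub_nonneg.2 (hρ.apply_le_one j)) (sub_nonneg.2 htj) hv

theorem hasGrowthBound_moranStep (hρ : HasControlledGaps b ρ) (hs₀ : 0 < s) (hs₁ : s ≤ 1)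
    (hsum : ∑ k ∈ Finset.range n, (b k - b (k + 1)) ^ s = 1)
    (hν : HasGrowthBound s (growthConst ρ s n) (3 ^ (1 - s) * growthConst ρ s n) ν) :
    HasGrowthBound s (growthConst ρ s n) (3 ^ (1 - s) * growthConst ρ s n)
      (moranStep b n s ν) where
  isProbabilityMeasure :=
    have := hν.isProbabilityMeasure
    isProbabilityMeasure_hutchinson (fun _ _ => (continuous_gAff b _).measurable)
      (fun k _ => Real.rpow_nonneg (sub_nonneg.2 (hρ.strictAnti.antitone k.le_succ)) s) hsum ν
  measure_compl_Ioo :=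
    hutchinson_compl_eq_zero (fun _ _ => (continuous_gAff b _).measurable) measurableSet_Ioo
      (fun k _ => (mapsTo_gAff_succ_Ioo (hρ.strictAnti k.lt_succ_self)).mono_right
        (Ioo_subset_Ioo (hρ.pos _).le (hρ.apply_le_one k))) hν.measure_compl_Ioo
  real_Icc_zero_le _ := hρ.moranStep_real_Icc_zero_le hν hs₀ hs₁
  real_Icc_one_le _ := hρ.moranStep_real_Icc_one_le hν hs₀ hs₁
  real_Icc_le _ _ _ hxy hy := hν.moranStep_real_Icc_le hρ.strictAnti hs₀ hs₁
    (rpow_le_growthConst hρ.ratio_nonneg hρ.lt_one hs₀ hs₁) hxy (hy.trans_eq hρ.apply_zero.symm)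

theorem hasGrowthBound_iterate_moranStep (hρ : HasControlledGaps b ρ) (hs₀ : 0 < s)
    (hs₁ : s ≤ 1) (hn : 1 ≤ n) (hsum : ∑ k ∈ Finset.range n, (b k - b (k + 1)) ^ s = 1) (m : ℕ) :
    HasGrowthBound s (growthConst ρ s n) (3 ^ (1 - s) * growthConst ρ s n)
      ((moranStep b n s)^[m] (volume.restrict (Ioo 0 1))) := by
  induction m with
  | zero =>
    have hK := one_le_growthConst hρ.ratio_nonneg hρ.lt_one hs₀ hs₁ hn
    exact hasGrowthBound_volume_restrict_Ioo hs₁ hK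
      (one_le_mul_of_one_le_of_one_le (Real.one_le_rpow (by norm_num) (sub_nonneg.2 hs₁)) hK)
  | succ m ih =>
    rw [Function.iterate_succ_apply']
    exact hρ.hasGrowthBound_moranStep hs₀ hs₁ hsum ih

theorem inv_le_hausdorffMeasure_limitSet_gAff (hρ : HasControlledGaps b ρ) (hs₀ : 0 < s)
    (hs₁ : s ≤ 1) (hn : 1 ≤ n) (hsum : ∑ k ∈ Finset.range n, (b k - b (k + 1)) ^ s = 1) :
    (ENNReal.ofReal (3 ^ (1 - s) * growthConst ρ s n))⁻¹ ≤ μH[s] (limitSet (gAff b) n) := by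
  have hbound := hρ.hasGrowthBound_iterate_moranStep hs₀ hs₁ hn hsum
  have hK := one_le_growthConst hρ.ratio_nonneg hρ.lt_one hs₀ hs₁ hn
  have hcont (k : ℕ) (_ : k < n) : Continuous (gAff b (k + 1)) := continuous_gAff b _
  have hmaps (k : ℕ) (_ : k < n) : MapsTo (gAff b (k + 1)) (Icc 0 1) (Icc 0 1) :=
    (mapsTo_gAff_succ_Icc (hρ.strictAnti.antitone k.le_succ)).mono_right
      (Icc_subset_Icc (hρ.pos _).le (hρ.apply_le_one k))
  rw [limitSet_eq_iInter_levelSet, ← one_div]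
  refine div_le_hausdorffMeasure_iInter hs₀ ENNReal.ofReal_ne_top
    (fun l m hlm => antitone_levelSet hmaps (Nat.succ_le_succ hlm))
    (fun m => isCompact_levelSet hcont (m + 1)) (fun m => ?_)
    fun m A => (hbound (m + 1)).measure_le_mul_ediam_rpow hs₀.le (by positivity) A
  have := (hbound (m + 1)).isProbabilityMeasure
  have hconc : ((moranStep b n s)^[m + 1] (volume.restrict (Ioo 0 1)))
      (levelSet (gAff b) n (m + 1))ᶜ = 0 :=
    hutchinson_iterate_compl_levelSet hcont (measure_mono_null
      (compl_subset_compl.2 Ioo_subset_Icc_self) (hbound 0).measure_compl_Ioo) (m + 1)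
  exact ((prob_compl_eq_zero_iff (isCompact_levelSet hcont _).measurableSet).1 hconc).ge

end HasControlledGaps

end GrowthBound

section Asymptotics

variable {b h : ℕ → ℝ}

theorem exists_hasControlledGaps (hb : StrictAnti b) (hb₀ : b 0 = 1)
    (hb_lim : Tendsto b atTop (𝓝 0)) {M : ℝ} (hM : ∀ k, (b k - b (k + 1)) / b (k + 1) ≤ M) :
    ∃ ρ, HasControlledGaps b ρ := by
  have hpos (k : ℕ) : 0 < b k :=
    (hb.antitone.le_of_tendsto hb_lim (k + 1)).trans_lt (hb k.lt_succ_self)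
  have hM₀ : 0 < M := (div_pos (sub_pos.2 (hb zero_lt_one)) (hpos 1)).trans_le (hM 0)
  have hgap (k : ℕ) : b k - b (k + 1) ≤ M / (1 + M) * b k := by
    have hk := (div_le_iff₀ (hpos (k + 1))).1 (hM k)
    rw [div_mul_eq_mul_div, le_div_iff₀ (by positivity)]
    linarith
  exact ⟨max (M / (1 + M)) (b 1), {
    strictAnti := hb
    apply_zero := hb₀
    pos := hpos
    lt_one := max_lt ((div_lt_one (by positivity)).2 (by linarith)) (hb₀ ▸ hb zero_lt_one)
    sub_succ_le := fun k => (hgap k).trans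
      (mul_le_mul_of_nonneg_right (le_max_left _ _) (hpos k).le)
    apply_one_le := le_max_right _ _ }⟩

theorem le_one_of_sum_sub_succ_rpow_eq_one {n : ℕ} {s : ℝ} (hb : Antitone b) (hb₀ : b 0 = 1)
    (hpos : ∀ k, 0 < b k) (hsum : ∑ k ∈ Finset.range n, (b k - b (k + 1)) ^ s = 1) : s ≤ 1 := by
  by_contra! hs
  have hle (k : ℕ) : (b k - b (k + 1)) ^ s ≤ b k - b (k + 1) :=
    Real.rpow_le_self_of_le_one (sub_nonneg.2 (hb k.le_succ))
      (by linarith [hb k.zero_le, hpos (k + 1)]) hs.le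
  have := (Finset.sum_le_sum fun k (_ : k ∈ Finset.range n) => hle k).trans_eq
    (Finset.sum_range_sub' b n)
  linarith [hpos n]

theorem tendsto_natCast_rpow_one_sub
    (hlog : Tendsto (fun n : ℕ => (1 - h n) * Real.log n) atTop (𝓝 0)) :
    Tendsto (fun n : ℕ => (n : ℝ) ^ (1 - h n)) atTop (𝓝 1) := by
  have hexp := (Real.continuous_exp.tendsto 0).comp hlog
  rw [Real.exp_zero] at hexp
  refine hexp.congr' ?_
  filter_upwards [eventually_gt_atTop 0] with n hn
  rw [Function.comp_apply, mul_comm, Real.rpow_def_of_pos (Nat.cast_pos.2 hn)]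

theorem tendsto_one_of_tendsto_one_sub_mul_log
    (hlog : Tendsto (fun n : ℕ => (1 - h n) * Real.log n) atTop (𝓝 0)) :
    Tendsto h atTop (𝓝 1) := by
  have hlog_top : Tendsto (fun n : ℕ => Real.log n) atTop atTop :=
    Real.tendsto_log_atTop.comp tendsto_natCast_atTop_atTop
  have hsub : Tendsto (fun n => 1 - h n) atTop (𝓝 0) := by
    refine (hlog.div_atTop hlog_top).congr' ?_
    filter_upwards [hlog_top.eventually_gt_atTop 0] with n hn
    exact mul_div_cancel_right₀ _ hn.ne'
  simpa using hsub.const_sub 1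

theorem tendsto_inv_ofReal_mul_growthConst {ρ : ℝ} (hρ : ρ < 1)
    (hlog : Tendsto (fun n : ℕ => (1 - h n) * Real.log n) atTop (𝓝 0)) :
    Tendsto (fun n => (ENNReal.ofReal (3 ^ (1 - h n) * growthConst ρ (h n) n))⁻¹) atTop (𝓝 1) := by
  have hh := tendsto_one_of_tendsto_one_sub_mul_log hlog
  have hthree : Tendsto (fun n => (3 : ℝ) ^ (1 - h n)) atTop (𝓝 1) := by
    simpa using (tendsto_const_nhds (x := (3 : ℝ))).rpow (hh.const_sub 1) (.inl three_ne_zero)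
  have hK := tendsto_growthConst hρ hh (tendsto_natCast_rpow_one_sub hlog)
  simpa using tendsto_inv_iff.2 (ENNReal.tendsto_ofReal (hthree.mul hK))

end Asymptotics

/-- In the linear setting, under (C1) and (C2), `H_{h_n}(J_n) → 1`. -/
theorem linear_hausdorff_measure_tendsto_one
    (b : ℕ → ℝ) (h : ℕ → ℝ)
    (hb0 : b 0 = 1) (hbanti : StrictAnti b)
    (hblim : Filter.Tendsto b Filter.atTop (nhds 0))
    (hmoran : ∀ n, 1 ≤ n → ∑ k ∈ Finset.Icc 1 n, (b (k - 1) - b k) ^ h n = 1)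
    (hdimH : ∀ n, 1 ≤ n → dimH (limitSet (gAff b) n) = ENNReal.ofReal (h n))
    (hC1 : Filter.Tendsto (fun n : ℕ => (1 - h n) * Real.log n) Filter.atTop (nhds 0))
    (hC2 : ∃ M : ℝ, ∀ k : ℕ, (b k - b (k + 1)) / b (k + 1) ≤ M) :
    Filter.Tendsto (fun n : ℕ => μH[h n] (limitSet (gAff b) n)) Filter.atTop (nhds 1) := by
  obtain ⟨M, hM⟩ := hC2
  obtain ⟨ρ, hρ⟩ := exists_hasControlledGaps hbanti hb0 hblim hM
  have hsum (n : ℕ) (hn : 1 ≤ n) : ∑ k ∈ Finset.range n, (b k - b (k + 1)) ^ h n = 1 := by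
    simpa [← Finset.Ico_add_one_right_eq_Icc, Finset.sum_Ico_eq_sum_range, add_comm]
      using hmoran n hn
  have hpos : ∀ᶠ n in atTop, 0 < h n :=
    (tendsto_one_of_tendsto_one_sub_mul_log hC1).eventually_const_lt one_pos
  refine tendsto_of_tendsto_of_tendsto_of_le_of_le'
    (tendsto_inv_ofReal_mul_growthConst hρ.lt_one hC1) tendsto_const_nhds ?_ ?_
  · filter_upwards [hpos, eventually_ge_atTop 1] with n hs hn
    exact hρ.inv_le_hausdorffMeasure_limitSet_gAff hs
      (le_one_of_sum_sub_succ_rpow_eq_one hbanti.antitone hb0 hρ.pos (hsum n hn)) hn (hsum n hn)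
  · filter_upwards [hpos, eventually_ge_atTop 1] with n hs hn
    exact hausdorffMeasure_limitSet_gAff_le_one hbanti.antitone hb0 hρ.pos hs.le (hsum n hn).le
end
end

section
/- In the linear setting, assume sup_{k≥1} (b_{k−1} − b_k)/b_k < ∞. Then for every ε > 0 there exists l_0 ∈ ℕ such that for every l > l_0, every n ≥ 1, and every interval [a,b] ∈ F_l^n, one has b/a ≤ 1 + ε. -/
open Set Filter MeasureTheory Topology

noncomputable section

/-!
Every `g_k` has the same contraction ratio `M / (M + 1) < 1`, where `M` bounds the relative gaps:
`a_k ≤ M b_k` and `b_k ≤ 1 - a_k` give `a_k ≤ M (1 - a_k)`. Hence the image of `[0, 1]` under the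
last `l - 1` maps of a word of length `l` has diameter at most `(M / (M + 1)) ^ (l - 1)`. The
outermost map `g_k` scales this by `a_k ≤ M b_k` and lands to the right of `b_k`, so the ratio of
the endpoints is at most `1 + M (M / (M + 1)) ^ (l - 1)`.
-/

open scoped NNReal

section WordComp

variable {g : ℕ → ℝ → ℝ} {w : List ℕ}

theorem mapsTo_wordComp {s : Set ℝ} (hg : ∀ i ∈ w, MapsTo (g i) s s) :
    MapsTo (wordComp g w) s s := by
  induction w with
  | nil => exact mapsTo_id s
  | cons k w ih =>
    obtain ⟨hk, hw⟩ := List.forall_mem_cons.1 hg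
    exact hk.comp (ih hw)

theorem lipschitzWith_wordComp {K : ℝ≥0} (hg : ∀ i ∈ w, LipschitzWith K (g i)) :
    LipschitzWith (K ^ w.length) (wordComp g w) := by
  induction w with
  | nil => exact LipschitzWith.id
  | cons k w ih =>
    obtain ⟨hk, hw⟩ := List.forall_mem_cons.1 hg
    rw [List.length_cons, pow_succ']
    exact hk.comp (ih hw)

end WordComp

theorem lt_of_strictAnti_of_tendsto {α : Type*} [TopologicalSpace α] [Preorder α]
    [OrderClosedTopology α] {f : ℕ → α} {a : α} (hf : StrictAnti f)
    (ha : Tendsto f atTop (𝓝 a)) (k : ℕ) : a < f k :=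
  (hf.antitone.le_of_tendsto ha (k + 1)).trans_lt (hf k.lt_succ_self)

theorem sub_le_div_add_one_of_sub_div_le {c d M : ℝ} (hM : 0 ≤ M) (hc : 0 < c) (hd : d ≤ 1)
    (hgap : (d - c) / c ≤ M) : d - c ≤ M / (M + 1) := by
  have hgap_mul : d - c ≤ M * c := (div_le_iff₀ hc).1 hgap
  have hc_le : M * c ≤ M * (1 - (d - c)) := mul_le_mul_of_nonneg_left (by linarith) hM
  rw [le_div_iff₀ (by positivity)]
  linarith

section GAff

variable {b : ℕ → ℝ} {k : ℕ}

theorem gAff_sub_gAff (b : ℕ → ℝ) (k : ℕ) (s t : ℝ) :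
    gAff b k s - gAff b k t = (b (k - 1) - b k) * (t - s) := by
  unfold gAff
  ring

theorem lipschitzWith_gAff {K : ℝ≥0} (hK : |b (k - 1) - b k| ≤ K) :
    LipschitzWith K (gAff b k) := by
  refine LipschitzWith.of_dist_le_mul fun s t => ?_
  rw [Real.dist_eq, gAff_sub_gAff, abs_mul, dist_comm, Real.dist_eq]
  exact mul_le_mul_of_nonneg_right hK (abs_nonneg _)

theorem mapsTo_gAff_Icc (hk : b k ≤ b (k - 1)) :
    MapsTo (gAff b k) (Icc 0 1) (Icc (b k) (b (k - 1))) := by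
  rintro t ⟨ht0, ht1⟩
  have hgap : 0 ≤ b (k - 1) - b k := sub_nonneg.2 hk
  have hlower := mul_le_of_le_one_right hgap ht1
  have hupper := mul_nonneg hgap ht0
  constructor <;> unfold gAff <;> linarith

theorem gAff_div_gAff_le {M s t : ℝ} (hpos : 0 < b k) (hk : b k ≤ b (k - 1))
    (hgap : (b (k - 1) - b k) / b k ≤ M) (ht : t ∈ Icc (0 : ℝ) 1) :
    gAff b k s / gAff b k t ≤ 1 + M * dist s t := by
  have hle : b k ≤ gAff b k t := (mapsTo_gAff_Icc hk ht).1
  have hM : 0 ≤ M := (div_nonneg (sub_nonneg.2 hk) hpos.le).trans hgap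
  have hsub : gAff b k s - gAff b k t ≤ M * dist s t * gAff b k t :=
    calc gAff b k s - gAff b k t = (b (k - 1) - b k) * (t - s) := gAff_sub_gAff b k s t
      _ ≤ (b (k - 1) - b k) * dist s t := by
        rw [dist_comm, Real.dist_eq]
        exact mul_le_mul_of_nonneg_left (le_abs_self _) (sub_nonneg.2 hk)
      _ ≤ M * b k * dist s t := by
        gcongr
        exact (div_le_iff₀ hpos).1 hgap
      _ = M * dist s t * b k := by ring
      _ ≤ M * dist s t * gAff b k t := by gcongr
  rw [div_le_iff₀ (hpos.trans_le hle)]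
  linarith

end GAff

section Generations

variable {b : ℕ → ℝ} {w : List ℕ}

theorem mapsTo_wordComp_gAff_Icc (hb0 : b 0 ≤ 1) (hb : Antitone b) (hpos : ∀ k, 0 < b k) :
    MapsTo (wordComp (gAff b) w) (Icc 0 1) (Icc 0 1) :=
  mapsTo_wordComp fun i _ => (mapsTo_gAff_Icc (hb (Nat.sub_le i 1))).mono_right
    (Icc_subset_Icc (hpos i).le ((hb (Nat.zero_le _)).trans hb0))

theorem lipschitzWith_wordComp_gAff {M : ℝ≥0} (hb0 : b 0 ≤ 1) (hb : Antitone b)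
    (hpos : ∀ k, 0 < b k) (hgap : ∀ k ∈ w, (b (k - 1) - b k) / b k ≤ M) :
    LipschitzWith ((M / (M + 1)) ^ w.length) (wordComp (gAff b) w) := by
  refine lipschitzWith_wordComp fun i hi => lipschitzWith_gAff ?_
  rw [abs_of_nonneg (sub_nonneg.2 (hb (Nat.sub_le i 1)))]
  exact_mod_cast sub_le_div_add_one_of_sub_div_le M.2 (hpos i)
    ((hb (Nat.zero_le _)).trans hb0) (hgap i hi)

theorem wordComp_gAff_cons_div_le {M : ℝ≥0} {k : ℕ} {u v : ℝ} (hb0 : b 0 ≤ 1) (hb : Antitone b)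
    (hpos : ∀ k, 0 < b k) (hgap : ∀ i ∈ k :: w, (b (i - 1) - b i) / b i ≤ M)
    (hu : u ∈ Icc (0 : ℝ) 1) (hv : v ∈ Icc (0 : ℝ) 1) :
    wordComp (gAff b) (k :: w) u / wordComp (gAff b) (k :: w) v
      ≤ 1 + M * (M / (M + 1)) ^ w.length := by
  obtain ⟨hgap_head, hgap_tail⟩ := List.forall_mem_cons.1 hgap
  have hdist : dist (wordComp (gAff b) w u) (wordComp (gAff b) w v)
      ≤ (M / (M + 1) : ℝ) ^ w.length :=
    calc dist (wordComp (gAff b) w u) (wordComp (gAff b) w v)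
        ≤ (M / (M + 1) : ℝ) ^ w.length * dist u v := by
          exact_mod_cast (lipschitzWith_wordComp_gAff hb0 hb hpos hgap_tail).dist_le_mul u v
      _ ≤ (M / (M + 1) : ℝ) ^ w.length :=
          mul_le_of_le_one_right (by positivity) (by simpa using Real.dist_le_of_mem_Icc hu hv)
  calc wordComp (gAff b) (k :: w) u / wordComp (gAff b) (k :: w) v
      ≤ 1 + M * dist (wordComp (gAff b) w u) (wordComp (gAff b) w v) :=
        gAff_div_gAff_le (hpos k) (hb (Nat.sub_le k 1)) hgap_head
          (mapsTo_wordComp_gAff_Icc hb0 hb hpos hv)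
    _ ≤ 1 + M * (M / (M + 1)) ^ w.length := by gcongr

end Generations

theorem exists_forall_mul_div_add_one_pow_le (M : ℝ≥0) {ε : ℝ} (hε : 0 < ε) :
    ∃ N : ℕ, ∀ m ≥ N, (M : ℝ) * (M / (M + 1)) ^ m ≤ ε := by
  have hratio : (M : ℝ) / (M + 1) < 1 := (div_lt_one (by positivity)).2 (lt_add_one _)
  have hlim : Tendsto (fun m : ℕ => (M : ℝ) * (M / (M + 1)) ^ m) atTop (𝓝 0) := by
    simpa using (tendsto_pow_atTop_nhds_zero_of_lt_one (by positivity) hratio).const_mul (M : ℝ)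
  exact eventually_atTop.1 (hlim.eventually_le_const hε)

theorem linear_generation_interval_ratio_general (b : ℕ → ℝ) (hb0 : b 0 ≤ 1) (hb : Antitone b)
    (hpos : ∀ k, 0 < b k) (hsup : ∃ M : ℝ, ∀ k : ℕ, 1 ≤ k → (b (k - 1) - b k) / b k ≤ M) :
    ∀ ε > (0 : ℝ), ∃ l₀ : ℕ, ∀ w : List ℕ, l₀ < w.length → (∀ i ∈ w, 1 ≤ i) → ∀ x y : ℝ,
      Icc x y = wordComp (gAff b) w '' Icc (0 : ℝ) 1 → y / x ≤ 1 + ε := by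
  intro ε hε
  obtain ⟨M, hM⟩ := hsup
  have hM_nonneg : 0 ≤ M :=
    (div_nonneg (sub_nonneg.2 (hb (Nat.sub_le 1 1))) (hpos 1).le).trans (hM 1 le_rfl)
  lift M to ℝ≥0 using hM_nonneg
  obtain ⟨N, hN⟩ := exists_forall_mul_div_add_one_pow_le M hε
  refine ⟨N, fun w hlen hw x y himage => ?_⟩
  have hxy : x ≤ y :=
    nonempty_Icc.1 (himage ▸ (nonempty_Icc.2 zero_le_one).image (wordComp (gAff b) w))
  obtain ⟨u, hu, rfl⟩ : x ∈ wordComp (gAff b) w '' Icc 0 1 := himage ▸ left_mem_Icc.2 hxy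
  obtain ⟨v, hv, rfl⟩ : y ∈ wordComp (gAff b) w '' Icc 0 1 := himage ▸ right_mem_Icc.2 hxy
  obtain ⟨k, w, rfl⟩ := List.exists_cons_of_length_pos (Nat.zero_lt_of_lt hlen)
  have hratio := wordComp_gAff_cons_div_le hb0 hb hpos (fun i hi => hM i (hw i hi)) hv hu
  exact hratio.trans (add_le_add_right (hN w.length (Nat.lt_succ_iff.1 hlen)) 1)

/-- In the linear setting, if `sup_{k≥1} (b_{k-1} - b_k)/b_k < ∞`, then for every `ε > 0` there is
    `l₀` such that every interval `[a, b]` of generation `l > l₀` of any `S_n` satisfies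
    `b/a ≤ 1 + ε`. -/
theorem linear_generation_interval_ratio
    (b : ℕ → ℝ)
    (hb0 : b 0 = 1) (hbanti : StrictAnti b)
    (hblim : Filter.Tendsto b Filter.atTop (nhds 0))
    (hsup : ∃ M : ℝ, ∀ k : ℕ, 1 ≤ k → (b (k - 1) - b k) / b k ≤ M) :
    ∀ ε > (0 : ℝ), ∃ l₀ : ℕ, ∀ l > l₀, ∀ n : ℕ, 1 ≤ n → ∀ x y : ℝ,
      (∃ w : List ℕ, w.length = l ∧ (∀ i ∈ w, 1 ≤ i ∧ i ≤ n) ∧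
        Set.Icc x y = wordComp (gAff b) w '' Set.Icc (0 : ℝ) 1) →
      y / x ≤ 1 + ε := by
  intro ε hε
  obtain ⟨l₀, hl₀⟩ := linear_generation_interval_ratio_general b hb0.le hbanti.antitone
    (lt_of_strictAnti_of_tendsto hbanti hblim) hsup ε hε
  exact ⟨l₀, fun l hl n _ x y ⟨w, hlen, hw, himage⟩ =>
    hl₀ w (hlen ▸ hl) (fun i hi => (hw i hi).1) x y himage⟩
end
end

section
/- In the linear setting, suppose there exists t_0 < 1 such that ∑_{k=1}^∞ a_k^t < ∞ for all t ≥ t_0. Then for every n ≥ 1 and every t with t_0 ≤ t ≤ h_n, one has 1 − h_n ≤ (∑_{k=n+1}^∞ a_k^t) / (∑_{k=1}^∞ a_k · ln(1/a_k)). -/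
open Set Filter MeasureTheory Topology

noncomputable section

/-!
The tangent-line bound `exp u ≥ 1 + u` gives `(1 - h) · (-x log x) ≤ x ^ h - x`. Summed over all
weights, the right-hand side becomes `∑ a_k ^ h - 1`. By Moran's equation the first `n` terms of
this sum already add up to `1`, so what is left is the tail `∑_{k > n} a_k ^ h`, and lowering the
exponent from `h` to `t` only increases it, the weights being less than `1`.
-/

theorem one_sub_mul_negMulLog_le_rpow_sub {x : ℝ} (hx : 0 ≤ x) (s : ℝ) :
    (1 - s) * Real.negMulLog x ≤ x ^ s - x := by
  obtain rfl | hx := hx.eq_or_lt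
  · simpa using Real.rpow_nonneg le_rfl s
  have tangent_le : Real.log x * (s - 1) + 1 ≤ x ^ (s - 1) := by
    rw [Real.rpow_def_of_pos hx]
    exact Real.add_one_le_exp _
  calc (1 - s) * Real.negMulLog x
      = x * (Real.log x * (s - 1) + 1) - x := by rw [Real.negMulLog]; ring
    _ ≤ x * x ^ (s - 1) - x := by gcongr
    _ = x ^ s - x := by rw [Real.rpow_sub_one hx.ne', mul_div_cancel₀ _ hx.ne']

theorem negMulLog_pos {x : ℝ} (hx₀ : 0 < x) (hx₁ : x < 1) : 0 < Real.negMulLog x :=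
  mul_pos_of_neg_of_neg (neg_neg_of_pos hx₀) (Real.log_neg hx₀ hx₁)

theorem negMulLog_eq_mul_log_one_div (x : ℝ) : Real.negMulLog x = x * Real.log (1 / x) := by
  rw [Real.negMulLog, one_div, Real.log_inv, neg_mul_comm]

section Weights

variable {ι : Type*} {a : ι → ℝ} {s t : ℝ}

theorem summable_rpow_of_exponent_le (ha₀ : ∀ i, 0 < a i) (ha₁ : ∀ i, a i ≤ 1) (hts : t ≤ s)
    (ht : Summable fun i ↦ a i ^ t) : Summable fun i ↦ a i ^ s :=
  ht.of_nonneg_of_le (fun i ↦ Real.rpow_nonneg (ha₀ i).le s)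
    fun i ↦ Real.rpow_le_rpow_of_exponent_ge (ha₀ i) (ha₁ i) hts

theorem summable_negMulLog (ha₀ : ∀ i, 0 ≤ a i) (ha₁ : ∀ i, a i ≤ 1) (hs₁ : s < 1)
    (ha : Summable a) (hs : Summable fun i ↦ a i ^ s) :
    Summable fun i ↦ Real.negMulLog (a i) := by
  have one_sub_pos : 0 < 1 - s := sub_pos.2 hs₁
  exact (summable_mul_left_iff one_sub_pos.ne').1 <| (hs.sub ha).of_nonneg_of_le
    (fun i ↦ mul_nonneg one_sub_pos.le (Real.negMulLog_nonneg (ha₀ i) (ha₁ i)))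
    fun i ↦ one_sub_mul_negMulLog_le_rpow_sub (ha₀ i) s

theorem one_sub_mul_tsum_negMulLog_le (ha₀ : ∀ i, 0 ≤ a i) (ha₁ : ∀ i, a i ≤ 1) (hs₁ : s < 1)
    (ha : Summable a) (hs : Summable fun i ↦ a i ^ s) :
    (1 - s) * ∑' i, Real.negMulLog (a i) ≤ ∑' i, a i ^ s - ∑' i, a i := by
  rw [← tsum_mul_left, ← hs.tsum_sub ha]
  exact ((summable_negMulLog ha₀ ha₁ hs₁ ha hs).mul_left _).tsum_le_tsum
    (fun i ↦ one_sub_mul_negMulLog_le_rpow_sub (ha₀ i) s) (hs.sub ha)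

theorem tsum_subtype_rpow_le_of_exponent_le (ha₀ : ∀ i, 0 < a i) (ha₁ : ∀ i, a i ≤ 1)
    (hts : t ≤ s) (ht : Summable fun i ↦ a i ^ t) (A : Set ι) :
    ∑' i : A, a i ^ s ≤ ∑' i : A, a i ^ t :=
  ((summable_rpow_of_exponent_le ha₀ ha₁ hts ht).subtype A).tsum_le_tsum
    (fun i ↦ Real.rpow_le_rpow_of_exponent_ge (ha₀ i) (ha₁ i) hts) (ht.subtype A)

theorem linear_dimension_deficit_bound_general [Nontrivial ι] (ha₀ : ∀ i, 0 < a i)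
    (ha : HasSum a 1) {A : Set ι} {h : ℝ} (hmoran : ∑' i : A, a i ^ h = 1) (hth : t ≤ h)
    (ht : Summable fun i ↦ a i ^ t) :
    1 - h ≤ (∑' i : ↥Aᶜ, a i ^ t) / ∑' i, Real.negMulLog (a i) := by
  have lt_one (i : ι) : a i < 1 :=
    have ⟨j, hji⟩ := exists_ne i
    lt_hasSum ha i (fun k _ ↦ (ha₀ k).le) j hji (ha₀ j)
  have ha₁ (i : ι) : a i ≤ 1 := (lt_one i).le
  have negMulLog_nonneg (i : ι) : 0 ≤ Real.negMulLog (a i) :=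
    Real.negMulLog_nonneg (ha₀ i).le (ha₁ i)
  obtain h_ge | h_lt := le_or_gt 1 h
  · exact (sub_nonpos.2 h_ge).trans <|
      div_nonneg (tsum_nonneg fun i ↦ Real.rpow_nonneg (ha₀ i).le t) (tsum_nonneg negMulLog_nonneg)
  have summable_rpow : Summable fun i ↦ a i ^ h := summable_rpow_of_exponent_le ha₀ ha₁ hth ht
  obtain ⟨i⟩ : Nonempty ι := inferInstance
  have entropy_pos : 0 < ∑' i, Real.negMulLog (a i) :=
    (summable_negMulLog (fun i ↦ (ha₀ i).le) ha₁ h_lt ha.summable summable_rpow).tsum_pos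
      negMulLog_nonneg i (negMulLog_pos (ha₀ i) (lt_one i))
  rw [le_div_iff₀ entropy_pos]
  calc (1 - h) * ∑' i, Real.negMulLog (a i)
      ≤ ∑' i, a i ^ h - ∑' i, a i :=
        one_sub_mul_tsum_negMulLog_le (fun i ↦ (ha₀ i).le) ha₁ h_lt ha.summable summable_rpow
    _ = ∑' i : ↥Aᶜ, a i ^ h := by
        rw [← summable_rpow.tsum_subtype_add_tsum_subtype_compl A, hmoran, ha.tsum_eq,
          add_sub_cancel_left]
    _ ≤ ∑' i : ↥Aᶜ, a i ^ t := tsum_subtype_rpow_le_of_exponent_le ha₀ ha₁ hth ht Aᶜ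

end Weights

theorem hasSum_sub_succ_of_antitone {b : ℕ → ℝ} {l : ℝ} (hb : Antitone b)
    (hl : Tendsto b atTop (𝓝 l)) : HasSum (fun k ↦ b k - b (k + 1)) (b 0 - l) := by
  rw [hasSum_iff_tendsto_nat_of_nonneg fun k ↦ sub_nonneg.2 (hb k.le_succ)]
  simpa only [Finset.sum_range_sub'] using hl.const_sub (b 0)

theorem tsum_range_eq_sum_Icc_one {M : Type*} [AddCommMonoid M] [TopologicalSpace M]
    (f : ℕ → M) (n : ℕ) :
    ∑' k : (Finset.range n : Set ℕ), f (k + 1) = ∑ k ∈ Finset.Icc 1 n, f k := by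
  rw [Finset.tsum_subtype' (Finset.range n) fun k ↦ f (k + 1), Finset.range_eq_Ico,
    Finset.sum_Ico_add' f 0 n 1, zero_add, Finset.Ico_add_one_right_eq_Icc]

theorem tsum_compl_range_eq_tsum_add {M : Type*} [AddCommMonoid M] [TopologicalSpace M]
    (f : ℕ → M) (n : ℕ) :
    ∑' k : ↥(Finset.range n : Set ℕ)ᶜ, f k = ∑' k, f (n + k) := by
  simpa only [coe_notMemRangeEquiv_symm, add_comm n] using!
    ((notMemRangeEquiv n).symm.tsum_eq fun k ↦ f k).symm

/-- In the linear setting, if `∑_{k=1}^∞ a_k^t < ∞` for all `t ≥ t₀` (some `t₀ < 1`), then for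
    every `n ≥ 1` and every `t` with `t₀ ≤ t ≤ h_n`:
    `1 - h_n ≤ (∑_{k=n+1}^∞ a_k^t) / (∑_{k=1}^∞ a_k ln(1/a_k))`. -/
theorem linear_dimension_deficit_bound
    (b : ℕ → ℝ) (h : ℕ → ℝ)
    (hb0 : b 0 = 1) (hbanti : StrictAnti b)
    (hblim : Filter.Tendsto b Filter.atTop (nhds 0))
    (hmoran : ∀ n, 1 ≤ n → ∑ k ∈ Finset.Icc 1 n, (b (k - 1) - b k) ^ h n = 1)
    (hdimH : ∀ n, 1 ≤ n → dimH (limitSet (gAff b) n) = ENNReal.ofReal (h n))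
    (t₀ : ℝ) (ht₀ : t₀ < 1)
    (hsum : ∀ t : ℝ, t₀ ≤ t → Summable (fun k : ℕ => (b k - b (k + 1)) ^ t)) :
    ∀ n : ℕ, 1 ≤ n → ∀ t : ℝ, t₀ ≤ t → t ≤ h n →
      1 - h n ≤ (∑' k : ℕ, (b (n + k) - b (n + k + 1)) ^ t) /
        (∑' k : ℕ, (b k - b (k + 1)) * Real.log (1 / (b k - b (k + 1)))) := by
  intro n hn t ht hth
  have weight_pos (k : ℕ) : 0 < b k - b (k + 1) := sub_pos.2 (hbanti k.lt_succ_self)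
  have hasSum_weight : HasSum (fun k ↦ b k - b (k + 1)) 1 := by
    simpa only [hb0, sub_zero] using hasSum_sub_succ_of_antitone hbanti.antitone hblim
  have moran : ∑' k : (Finset.range n : Set ℕ), (b k - b (k + 1)) ^ h n = 1 :=
    (tsum_range_eq_sum_Icc_one (fun k ↦ (b (k - 1) - b k) ^ h n) n).trans (hmoran n hn)
  have deficit_le :=
    linear_dimension_deficit_bound_general weight_pos hasSum_weight moran hth (hsum t ht)
  simpa only [negMulLog_eq_mul_log_one_div,
    tsum_compl_range_eq_tsum_add fun k ↦ (b k - b (k + 1)) ^ t] using deficit_le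
end
end
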